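/- arXiv:2211.10631 — 9 statements merged into one kernel-verified Lean document; each statement's English description precedes it below -/
import Mathlib

section
/- Let Z be a subset system and P a poset. Then P is weakly meet s_Z-continuous if and only if for every x ∈ P and every U ∈ σ^Z(P), the set ↑(↓x ∩ U) belongs to σ^Z(P). -/
/-!
Members of `σ^Z` and `Γ^Z` are complements of each other, so `x ∈ cl(M)` means that every
`U ∈ σ^Z` containing `x` meets `M`. For `M = ↓x ∩ ↓D`, meeting `M` is the same as `D` meeting
`↑(↓x ∩ U)`, so weak meet continuity says that `D` meets `↑(↓x ∩ U)` whenever `x ∈ D^δ ∩ U`.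
That is the openness of `↑(↓x ∩ U)`, because `D^δ` is a lower set: a point of
`D^δ ∩ ↑(↓x ∩ U)` lies above some `a ∈ D^δ ∩ U` with `a ≤ x`, to which the condition applies.
-/

open Set

/-- A subset system on the category of posets. -/
structure SubsetSystem : Type 1 where
  Z : ∀ (P : Type) [PartialOrder P], Set (Set P)
  singleton_mem : ∀ (P : Type) [PartialOrder P] (x : P), {x} ∈ Z P
  image_mem : ∀ (P : Type) [PartialOrder P] (Q : Type) [PartialOrder Q]
    (f : P → Q), Monotone f → ∀ S ∈ Z P, f '' S ∈ Z Q

/-- The cut operator `A^δ = A^{ul}`. -/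
def cutOp {P : Type} [PartialOrder P] (A : Set P) : Set P :=
  lowerBounds (upperBounds A)

/-- The down-closure `↓A`. -/
def dSet {P : Type} [PartialOrder P] (A : Set P) : Set P := {p | ∃ a ∈ A, p ≤ a}

/-- The up-closure `↑A`. -/
def uSet {P : Type} [PartialOrder P] (A : Set P) : Set P := {p | ∃ a ∈ A, a ≤ p}

/-- The subbasic open sets `σ^Z(P)`. -/
def sigmaZ (Z : SubsetSystem) (P : Type) [PartialOrder P] : Set (Set P) :=
  {U | ∀ S ∈ Z.Z P, (cutOp S ∩ U).Nonempty → (S ∩ U).Nonempty}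

/-- The subbasic closed sets `Γ^Z(P)`. -/
def GammaZ (Z : SubsetSystem) (P : Type) [PartialOrder P] : Set (Set P) :=
  {A | ∀ S ∈ Z.Z P, S ⊆ A → cutOp S ⊆ A}

/-- The closure `cl_{σ^Z(P)}(M)`. -/
def clZ (Z : SubsetSystem) {P : Type} [PartialOrder P] (M : Set P) : Set P :=
  ⋂₀ {A | A ∈ GammaZ Z P ∧ M ⊆ A}

/-- `P` is weakly meet `s_Z`-continuous. -/
def WMSZ (Z : SubsetSystem) (P : Type) [PartialOrder P] : Prop :=
  ∀ x : P, ∀ D ∈ Z.Z P, x ∈ cutOp D → x ∈ clZ Z (Set.Iic x ∩ dSet D)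

/-- `A ≪_Z B`. -/
def wayBelowZ (Z : SubsetSystem) {P : Type} [PartialOrder P] (A B : Set P) : Prop :=
  ∀ S ∈ Z.Z P, (cutOp S ∩ uSet B).Nonempty → (S ∩ uSet A).Nonempty

/-- `↟_Z x = {y : y ≪_Z x}`. -/
def ddArrow (Z : SubsetSystem) {P : Type} [PartialOrder P] (x : P) : Set P :=
  {y | wayBelowZ Z {y} {x}}

/-- `P` is weak `s_Z`-continuous. -/
def WeakSZCont (Z : SubsetSystem) (P : Type) [PartialOrder P] : Prop :=
  ∀ x : P, x ∈ cutOp (ddArrow Z x)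

/-- `P` is `s_Z`-continuous. -/
def SZCont (Z : SubsetSystem) (P : Type) [PartialOrder P] : Prop :=
  WeakSZCont Z P ∧ ∀ x : P, ∃ S ∈ Z.Z P, ddArrow Z x = dSet S

/-- `f` is `σ^Z`-continuous. -/
def SigmaZCont (Z : SubsetSystem) {P Q : Type} [PartialOrder P] [PartialOrder Q]
    (f : P → Q) : Prop :=
  ∀ A ∈ GammaZ Z Q, f ⁻¹' A ∈ GammaZ Z P

/-- The interior w.r.t. the subbasic opens `σ^Z(P)`. -/
def intZ (Z : SubsetSystem) {P : Type} [PartialOrder P] (A : Set P) : Set P :=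
  ⋃₀ {U | U ∈ sigmaZ Z P ∧ U ⊆ A}

/-- `Fin P = {↑F : F ⊆_f P}` ordered by reverse inclusion. -/
def FinP (P : Type) [PartialOrder P] : Type :=
  {A : Set P // ∃ F : Set P, F.Finite ∧ A = uSet F}

instance (P : Type) [PartialOrder P] : PartialOrder (FinP P) :=
  PartialOrder.lift (fun A => OrderDual.toDual A.1)
    (fun A B h => Subtype.ext (OrderDual.toDual.injective h))

/-- The set of minimal elements of `A`. -/
def minSet {P : Type} [PartialOrder P] (A : Set P) : Set P :=
  {x ∈ A | ∀ y ∈ A, y ≤ x → y = x}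

/-- `ω_Z(x) = {F finite : F ≪_Z x}`. -/
def omegaZ (Z : SubsetSystem) {P : Type} [PartialOrder P] (x : P) : Set (Set P) :=
  {F | F.Finite ∧ wayBelowZ Z F {x}}

/-- `P` is `s_Z`-quasicontinuous. -/
def SZQuasi (Z : SubsetSystem) (P : Type) [PartialOrder P] : Prop :=
  ∀ p : P,
    {A : FinP P | ∃ F ∈ omegaZ Z p, A.1 = uSet F} ∈ Z.Z (FinP P) ∧
    Set.Ici p = ⋂ F ∈ omegaZ Z p, uSet F

/-- `Z` has the Rudin property. -/
def RudinProp (Z : SubsetSystem) : Prop :=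
  ∀ (P : Type) [PartialOrder P], ∀ E : Set P, IsUpperSet E →
    ∀ G ∈ Z.Z (FinP P), (∀ A ∈ G, A.1 ≠ (∅ : Set P)) →
    (⋂ A ∈ G, A.1) ⊆ E →
    ∃ K : Set P,
      K ⊆ (⋃ A ∈ G, minSet A.1) ∧
      (∀ A ∈ G, (K ∩ minSet A.1).Nonempty) ∧
      K ∈ Z.Z P ∧
      (⋂ k ∈ K, Set.Ici k) ⊆ E ∧
      ∀ A ∈ G, ∀ B ∈ G, A.1 ⊆ B.1 →
        K ∩ minSet A.1 ⊆ uSet (K ∩ minSet B.1)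

/-- `Z` is union complete. -/
def UnionComplete (Z : SubsetSystem) : Prop :=
  ∀ (P : Type) [PartialOrder P], ∀ S ∈ Z.Z ↥(Z.Z P), (⋃ D ∈ S, D.1) ∈ Z.Z P

/-- `Z` has the finite family union property. -/
def FFUP (Z : SubsetSystem) : Prop :=
  ∀ (P : Type) [PartialOrder P], ∀ (n : ℕ) (S : Fin n → Set (FinP P)),
    (∀ i, S i ∈ Z.Z (FinP P)) →
    {A : FinP P | ∃ g : Fin n → FinP P, (∀ i, g i ∈ S i) ∧ A.1 = ⋃ i, (g i).1} ∈
      Z.Z (FinP P)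

/-- `Z` has property M. -/
def PropM (Z : SubsetSystem) : Prop :=
  ∀ (P : Type) [PartialOrder P], ∀ A : FinP P, {B : FinP P | A.1 ⊆ B.1} ∈ Z.Z (FinP P)

/-- The lower topology `ω(P)`, generated by the complements of principal filters. -/
def lowerTop (P : Type) [PartialOrder P] : TopologicalSpace P :=
  TopologicalSpace.generateFrom {s | ∃ a : P, s = (Set.Ici a)ᶜ}

/-- The relative cut `E^δ|_A`. -/
def cutIn {P : Type} [PartialOrder P] (E A : Set P) : Set P :=
  {p ∈ A | ∀ m ∈ upperBounds E ∩ A, p ≤ m}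

/-- `Z` is subset hereditary. -/
def SubsetHered (Z : SubsetSystem) : Prop :=
  ∀ (P : Type) [PartialOrder P] (Q : Type) [PartialOrder Q] (f : P → Q),
    (∀ x y : P, f x ≤ f y ↔ x ≤ y) → ∀ D : Set P, (D ∈ Z.Z P ↔ f '' D ∈ Z.Z Q)

/-- The `Z`-Scott topology on `P` is lower hereditary. -/
def LowerHered (Z : SubsetSystem) (P : Type) [PartialOrder P] : Prop :=
  ∀ A ∈ GammaZ Z P,
    GammaZ Z ↥A = {C : Set ↥A | ∃ B ∈ GammaZ Z P, C = Subtype.val ⁻¹' B}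

/-- `x ≺_Z y` (the `Z`-beneath relation). -/
def beneathZ (Z : SubsetSystem) {P : Type} [PartialOrder P] (x y : P) : Prop :=
  ∀ A ∈ GammaZ Z P, y ∈ cutOp A → x ∈ A

/-- `P` is `δ_Z`-continuous. -/
def DeltaZCont (Z : SubsetSystem) (P : Type) [PartialOrder P] : Prop :=
  ∀ a : P, a ∈ cutOp {m | beneathZ Z m a}

/-- `k_Z(L)`: the set of `Z`-compact elements. -/
def kZ (Z : SubsetSystem) (L : Type) [PartialOrder L] : Set L :=
  {x | beneathZ Z x x}

/-- Complementation turns members of `Γ^Z` into members of `σ^Z` and vice versa. -/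
theorem compl_mem_sigmaZ_iff (Z : SubsetSystem) {P : Type} [PartialOrder P] (A : Set P) :
    Aᶜ ∈ sigmaZ Z P ↔ A ∈ GammaZ Z P := by
  refine forall₂_congr fun S _ => ?_
  rw [← not_imp_not, Set.inter_compl_nonempty_iff, Set.inter_compl_nonempty_iff,
    not_not, not_not]

/-- `P` is weakly meet `s_Z`-continuous iff for every `x` and every
`U ∈ σ^Z(P)`, `↑(↓x ∩ U) ∈ σ^Z(P)`. -/
theorem stmt0 (Z : SubsetSystem) (P : Type) [PartialOrder P] :
    WMSZ Z P ↔ ∀ (x : P), ∀ U ∈ sigmaZ Z P, uSet (Set.Iic x ∩ U) ∈ sigmaZ Z P := by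
  constructor
  · rintro h x U hU S hS ⟨y, hy, a, ⟨hax, haU⟩, hay⟩
    -- Cuts are lower sets, so `a` lies in `S^δ` along with `y`.
    have haS : a ∈ cutOp S := fun m hm => hay.trans (hy hm)
    by_contra hne
    -- Otherwise `Uᶜ` is a closed set containing `↓a ∩ ↓S`, hence containing `a`.
    have hUc : Uᶜ ∈ GammaZ Z P := by
      rwa [← compl_mem_sigmaZ_iff, compl_compl]
    refine h a S hS haS Uᶜ ⟨hUc, ?_⟩ haU
    rintro b ⟨hba, s, hs, hbs⟩ hbU
    exact hne ⟨s, hs, b, ⟨le_trans hba hax, hbU⟩, hbs⟩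
  · rintro h x D hD hx A ⟨hA, hsub⟩
    by_contra hxA
    obtain ⟨d, hd, a, ⟨hax, haA⟩, had⟩ :=
      h x Aᶜ ((compl_mem_sigmaZ_iff Z A).2 hA) D hD ⟨x, hx, x, ⟨le_rfl, hxA⟩, le_rfl⟩
    exact haA (hsub ⟨hax, d, hd, had⟩)
end

section
/- Let Z be a subset system and P a Z-complete meet-semilattice (a meet-semilattice in which sup D exists for every D ∈ Z(P)). Then P is weakly meet s_Z-continuous if and only if for every x ∈ P and every D ∈ Z(P), x ∧ ⋁D = ⋁{x ∧ d : d ∈ D} (the right-hand supremum exists, since {x ∧ d : d ∈ D} ∈ Z(P) is the image of D under the monotone map p ↦ x ∧ p). -/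
/-!
Principal ideals `Iic b` belong to `Γ^Z(P)`, so testing the closure of `↓(x ⊓ s) ∩ ↓D` against
`Iic b`, for `b` an upper bound of `{x ⊓ d : d ∈ D}`, yields `x ⊓ s ≤ b`. Conversely, if
`x ∈ D^δ` then `x ≤ ⋁D`, so `x = x ⊓ ⋁D` lies in the cut of `{x ⊓ d : d ∈ D}`, a member of `Z(P)`
contained in `↓x ∩ ↓D`.
-/

open Set

theorem Iic_mem_GammaZ (Z : SubsetSystem) {P : Type} [PartialOrder P] (b : P) :
    Set.Iic b ∈ GammaZ Z P :=
  fun _ _ hSb _ hp => hp fun _ hq => hSb hq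

/-- for a `Z`-complete meet-semilattice, weak meet `s_Z`-continuity is
equivalent to `x ⊓ ⋁D = ⋁{x ⊓ d : d ∈ D}` for all `x` and `D ∈ Z(P)`. -/
theorem stmt1 (Z : SubsetSystem) (P : Type) [SemilatticeInf P]
    (hzc : ∀ D ∈ Z.Z P, ∃ s : P, IsLUB D s) :
    WMSZ Z P ↔
      ∀ (x : P), ∀ D ∈ Z.Z P, ∀ s : P, IsLUB D s →
        IsLUB ((fun d => x ⊓ d) '' D) (x ⊓ s) := by
  constructor
  · intro h x D hD s hs
    refine ⟨?_, fun b hb => ?_⟩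
    · rintro _ ⟨d, hd, rfl⟩
      exact inf_le_inf_left x (hs.1 hd)
    · have hcut : x ⊓ s ∈ cutOp D := fun u hu => inf_le_right.trans (hs.2 hu)
      refine h (x ⊓ s) D hD hcut (Set.Iic b) ⟨Iic_mem_GammaZ Z b, ?_⟩
      rintro p ⟨hp, d, hd, hpd⟩
      exact (le_inf (le_trans hp inf_le_left) hpd).trans (hb ⟨d, hd, rfl⟩)
  · rintro h x D hD hx A ⟨hA, hsub⟩
    obtain ⟨s, hs⟩ := hzc D hD
    have hxs : x ⊓ s = x := inf_eq_left.2 (hx hs.1)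
    have hlub := h x D hD s hs
    rw [hxs] at hlub
    have hmono : Monotone fun d : P => x ⊓ d := fun _ _ hab => inf_le_inf_left x hab
    refine hA _ (Z.image_mem P P _ hmono D hD) ?_ hlub.2
    rintro _ ⟨d, hd, rfl⟩
    exact hsub ⟨inf_le_left, d, hd, inf_le_right⟩
end

section
/- Let Z be a subset system, P a weakly meet s_Z-continuous poset, and F a finite subset of P. Then int_{σ^Z(P)}(↑F) ⊆ ⋃{⇟_Z x : x ∈ F}. -/
/-!
Let `p ∈ U ⊆ ↑F` with `U ∈ σ^Z(P)`, and suppose that no `x ∈ F` satisfies `x ≪_Z p`. As cuts are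
lower sets, each `x ∈ F` has a witness `D x ∈ Z(P)` with `p ∈ (D x)^δ` and `D x ∩ ↑x = ∅`.
Weak meet `s_Z`-continuity lets one descend from any `y ∈ U` with `y ≤ p` to some `y' ≤ y` in
`U ∩ ↓(D x)` (`exists_le_mem_dSet`). Doing this once for each element of the finite set `F`
gives a point `y ∈ U` lying in every `↓(D x)`. But `y ∈ ↑F`, so `x ≤ y` for some `x ∈ F`, and
then `D x` meets `↑x`, a contradiction.
-/

open Set

/-- The Scott-like descent step: inside `U ∈ σ^Z(P)` one can pass from a point of the cut `D^δ`
to a point below it in `↓D`, because `Uᶜ ∈ Γ^Z(P)` cannot contain `↓y ∩ ↓D`. -/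
lemma exists_le_mem_dSet {Z : SubsetSystem} {P : Type} [PartialOrder P] (h : WMSZ Z P)
    {U D : Set P} (hU : U ∈ sigmaZ Z P) (hD : D ∈ Z.Z P) {y : P} (hyU : y ∈ U)
    (hyD : y ∈ cutOp D) : ∃ z ∈ U, z ≤ y ∧ z ∈ dSet D := by
  by_contra! hcon
  refine h y D hD hyD Uᶜ ⟨?_, ?_⟩ hyU
  · intro S hS hSU q hq hqU
    obtain ⟨s, hs, hsU⟩ := hU S hS ⟨q, hq, hqU⟩
    exact hSU hs hsU
  · rintro z ⟨hzy, hzD⟩ hzU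
    exact hcon z hzU hzy hzD

/-- if `P` is weakly meet `s_Z`-continuous and `F` finite, then
`int_{σ^Z(P)}(↑F) ⊆ ⋃{⇟_Z x : x ∈ F}`. -/
theorem stmt3 (Z : SubsetSystem) (P : Type) [PartialOrder P] (h : WMSZ Z P)
    (F : Set P) (hF : F.Finite) :
    intZ Z (uSet F) ⊆ {p : P | ∃ x ∈ F, wayBelowZ Z {x} {p}} := by
  rintro p ⟨U, ⟨hU, hUF⟩, hpU⟩
  by_contra hcon
  have hwit : ∀ x ∈ F, ∃ D ∈ Z.Z P, p ∈ cutOp D ∧ ¬ (D ∩ uSet {x}).Nonempty := by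
    intro x hx
    by_contra! hx'
    refine hcon ⟨x, hx, ?_⟩
    rintro S hS ⟨q, hq, _, rfl, hpq⟩
    exact hx' S hS fun b hb => hpq.trans (hq hb)
  choose! D hDZ hpD hDx using hwit
  have hdesc : ∃ y ∈ U, y ≤ p ∧ ∀ x ∈ F, y ∈ dSet (D x) := by
    refine Set.Finite.induction_on_subset
      (motive := fun G _ => ∃ y ∈ U, y ≤ p ∧ ∀ x ∈ G, y ∈ dSet (D x)) F hF
      ⟨p, hpU, le_rfl, by simp⟩ ?_
    rintro a G ha - - ⟨y, hyU, hyp, hy⟩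
    obtain ⟨z, hzU, hzy, hz⟩ := exists_le_mem_dSet h hU (hDZ a ha) hyU
      (fun b hb => hyp.trans (hpD a ha hb))
    refine ⟨z, hzU, hzy.trans hyp, ?_⟩
    rintro x (rfl | hx)
    · exact hz
    · obtain ⟨d, hd, hyd⟩ := hy x hx
      exact ⟨d, hd, hzy.trans hyd⟩
  obtain ⟨y, hyU, -, hy⟩ := hdesc
  obtain ⟨x, hx, hxy⟩ := hUF hyU
  obtain ⟨d, hd, hyd⟩ := hy x hx
  exact hDx x hx ⟨d, hd, x, rfl, hxy.trans hyd⟩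
end

section
/- Let Z be a Rudin subset system which has the finite family union property, and let P be a poset that is both weakly meet s_Z-continuous and s_Z-quasicontinuous. Then for every finite subset F of P, ⇑_Z F = ⇟_Z F, where ⇑_Z F = {x ∈ P : F ≪_Z x} and ⇟_Z F = {p ∈ P : a ≪_Z p for some a ∈ F}. -/
/-!
If `F ≪ x` with `F` finite, then `U = {y | F ≪ y}` contains `x`, is contained in `↑F`, and belongs
to `σ^Z(P)` (`exists_wayBelowZ_of_mem_cutOp`). Suppose no `a ∈ F` satisfies `a ≪ x`: each `a`
has a witness `S_a ∈ Z(P)` with `x ∈ S_a^δ` and `a ∉ ↓S_a`. Weak meet continuity says that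
`y ∈ U` and `y ∈ S^δ` force some `y' ≤ y` in `U ∩ ↓S` (`exists_le_wayBelowZ`). Applied
successively to the finitely many `S_a`, it descends from `x` to a `y ∈ U` lying in every `↓S_a`
(`exists_common_lower`). As `y ∈ ↑F`, some `a ∈ F` is below `y`, hence in `↓S_a`: contradiction.

That `U` is in `σ^Z(P)` rests on a Rudin-type lemma (`exists_subset_uSet`): if `F ≪ x` and
`𝒢 ∈ Z(Fin P)` has `⋂𝒢 ⊆ ↑x`, then some `G ∈ 𝒢` lies in `↑F`. Otherwise all traces
of members of `𝒢` on `P \ ↑F` are nonempty, and the Rudin property on that subposet gives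
`K ∈ Z(P)` disjoint from `↑F` and meeting each `G`; then `K^u ⊆ ⋂𝒢 ⊆ ↑x`, so `x ∈ K^δ`, against
`F ≪ x`. For `S ∈ Z(P)` with `y ∈ S^δ`, union completeness lets this be applied to the family of
all `↑H` with `H ≪ s` for some `s ∈ S`.
-/

open Set

section

variable {Z : SubsetSystem} {P : Type} [PartialOrder P]

lemma wayBelowZ_mono_right {A : Set P} {x y : P} (hxy : x ≤ y) (h : wayBelowZ Z A {x}) :
    wayBelowZ Z A {y} := by
  rintro S hS ⟨p, hp, b, rfl, hb⟩
  exact h S hS ⟨p, hp, x, rfl, hxy.trans hb⟩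

lemma wayBelowZ_mono_left {A B : Set P} {x : P} (hAB : uSet A ⊆ uSet B)
    (h : wayBelowZ Z A {x}) : wayBelowZ Z B {x} := by
  intro S hS hp
  obtain ⟨s, hs, hsA⟩ := h S hS hp
  exact ⟨s, hs, hAB hsA⟩

lemma wayBelowZ.mem_uSet {A : Set P} {x : P} (h : wayBelowZ Z A {x}) : x ∈ uSet A := by
  obtain ⟨s, rfl, hs⟩ := h {x} (Z.singleton_mem P x)
    ⟨x, fun u hu => hu rfl, x, rfl, le_rfl⟩
  exact hs

/-- The trace of `↑H` on the complement of `↑F`. It is again finitely generated, since a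
generator below a point outside the upper set `↑F` is itself outside `↑F`. -/
def finTrace (F : Set P) (A : FinP P) : FinP {p : P // p ∉ uSet F} :=
  ⟨Subtype.val ⁻¹' A.1, by
    obtain ⟨H, hH, hA⟩ := A.2
    refine ⟨Subtype.val ⁻¹' H, hH.preimage Subtype.val_injective.injOn, ?_⟩
    rw [hA]
    ext q
    constructor
    · rintro ⟨h, hh, hq⟩
      exact ⟨⟨h, fun ⟨a, ha, hah⟩ => q.2 ⟨a, ha, hah.trans hq⟩⟩, hh, hq⟩
    · rintro ⟨h, hh, hq⟩
      exact ⟨h.1, hh, hq⟩⟩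

/-- The Rudin property lifts `F ≪ x` from members of `Z(P)` to members of `Z(Fin P)`. -/
lemma exists_subset_uSet (hR : RudinProp Z) {F : Set P} {x : P} (h : wayBelowZ Z F {x})
    {G : Set (FinP P)} (hG : G ∈ Z.Z (FinP P)) (hGx : (⋂ A ∈ G, A.1) ⊆ Set.Ici x) :
    ∃ A ∈ G, A.1 ⊆ uSet F := by
  by_contra! hcon
  have hmono : Monotone (finTrace F) := fun A B hAB q hq => hAB hq
  obtain ⟨K, -, hK, hKZ, -⟩ := hR {p : P // p ∉ uSet F} Set.univ isUpperSet_univ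
    (finTrace F '' G) (Z.image_mem _ _ _ hmono G hG)
    (by
      rintro _ ⟨A, hA, rfl⟩ he
      refine hcon A hA fun p hp => ?_
      by_contra hpF
      exact (he ▸ (show (⟨p, hpF⟩ : {p : P // p ∉ uSet F}) ∈ (finTrace F A).1 from hp) :
        _ ∈ (∅ : Set {p : P // p ∉ uSet F})))
    (Set.subset_univ _)
  have hKP : Subtype.val '' K ∈ Z.Z P := Z.image_mem _ _ _ (Subtype.mono_coe _) K hKZ
  have hx : x ∈ cutOp (Subtype.val '' K) := by
    intro u hu
    refine hGx (Set.mem_iInter₂.2 fun A hA => ?_)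
    obtain ⟨k, hkK, hkA, -⟩ := hK _ ⟨A, hA, rfl⟩
    have hku : k.1 ≤ u := hu ⟨k, hkK, rfl⟩
    have hkA' : k.1 ∈ A.1 := hkA
    obtain ⟨H, -, hAH⟩ := A.2
    rw [hAH] at hkA' ⊢
    obtain ⟨a, ha, hak⟩ := hkA'
    exact ⟨a, ha, hak.trans hku⟩
  obtain ⟨_, ⟨k, -, rfl⟩, hkF⟩ := h _ hKP ⟨x, hx, x, rfl, le_rfl⟩
  exact k.2 hkF

/-- In other words, `{y | F ≪ y}` belongs to `σ^Z(P)`. -/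
lemma exists_wayBelowZ_of_mem_cutOp (hU : UnionComplete Z) (hR : RudinProp Z) (hq : SZQuasi Z P)
    {F : Set P} {y : P} (h : wayBelowZ Z F {y}) {S : Set P} (hS : S ∈ Z.Z P)
    (hy : y ∈ cutOp S) : ∃ s ∈ S, wayBelowZ Z F {s} := by
  let g : P → ↥(Z.Z (FinP P)) := fun s => ⟨_, (hq s).1⟩
  have hg : Monotone g := by
    rintro s t hst A ⟨H, ⟨hHf, hH⟩, hA⟩
    exact ⟨H, ⟨hHf, wayBelowZ_mono_right hst hH⟩, hA⟩
  have hZ := hU (FinP P) (g '' S) (Z.image_mem _ _ g hg S hS)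
  obtain ⟨A, hA, hAF⟩ := exists_subset_uSet hR h hZ (by
    intro u hu
    refine hy fun s hs => ?_
    change u ∈ Set.Ici s
    rw [(hq s).2]
    refine Set.mem_iInter₂.2 fun H hH => ?_
    exact Set.mem_iInter₂.1 hu ⟨uSet H, H, hH.1, rfl⟩
      (Set.mem_iUnion₂.2 ⟨g s, ⟨s, hs, rfl⟩, H, hH, rfl⟩))
  obtain ⟨_, ⟨s, hs, rfl⟩, H, hH, hAH⟩ := Set.mem_iUnion₂.1 hA
  exact ⟨s, hs, wayBelowZ_mono_left (hAH ▸ hAF) hH.2⟩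

lemma exists_le_wayBelowZ (hU : UnionComplete Z) (hR : RudinProp Z) (hw : WMSZ Z P)
    (hq : SZQuasi Z P) {F : Set P} {y : P} (h : wayBelowZ Z F {y}) {S : Set P}
    (hS : S ∈ Z.Z P) (hy : y ∈ cutOp S) : ∃ z ≤ y, z ∈ dSet S ∧ wayBelowZ Z F {z} := by
  by_contra! hcon
  -- The complement of `{z | F ≪ z}` is a member of `Γ^Z(P)` containing `↓y ∩ ↓S` but not `y`.
  refine hw y S hS hy {z | ¬ wayBelowZ Z F {z}} ⟨?_, fun z hz => hcon z hz.1 hz.2⟩ h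
  intro T hT hTA z hz hFz
  obtain ⟨t, ht, hFt⟩ := exists_wayBelowZ_of_mem_cutOp hU hR hq hFz hT hz
  exact hTA ht hFt

lemma exists_common_lower (hU : UnionComplete Z) (hR : RudinProp Z) (hw : WMSZ Z P)
    (hq : SZQuasi Z P) {F : Set P} {x : P} (h : wayBelowZ Z F {x}) (S : P → Set P)
    {I : Set P} (hI : I.Finite) (hS : ∀ a ∈ I, S a ∈ Z.Z P ∧ x ∈ cutOp (S a)) :
    ∃ y ≤ x, wayBelowZ Z F {y} ∧ ∀ a ∈ I, y ∈ dSet (S a) := by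
  induction I, hI using Set.Finite.induction_on with
  | empty => exact ⟨x, le_rfl, h, fun a ha => ha.elim⟩
  | @insert b J _ _ ih =>
    obtain ⟨y, hyx, hFy, hy⟩ := ih fun a ha => hS a (Or.inr ha)
    obtain ⟨hbZ, hbx⟩ := hS b (Or.inl rfl)
    obtain ⟨z, hzy, hzS, hFz⟩ := exists_le_wayBelowZ hU hR hw hq hFy hbZ
      (fun u hu => hyx.trans (hbx hu))
    refine ⟨z, hzy.trans hyx, hFz, ?_⟩
    rintro a (rfl | ha)
    · exact hzS
    · obtain ⟨s, hs, hys⟩ := hy a ha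
      exact ⟨s, hs, hzy.trans hys⟩

end

/-- for a Rudin subset system with the finite family union property and
`P` weakly meet `s_Z`-continuous and `s_Z`-quasicontinuous, `⇑_Z F = ⇟_Z F` for
every finite `F ⊆ P`. -/
theorem stmt4 (Z : SubsetSystem) (hU : UnionComplete Z) (hR : RudinProp Z)
    (hFFU : FFUP Z) (P : Type) [PartialOrder P]
    (hw : WMSZ Z P) (hq : SZQuasi Z P) (F : Set P) (hF : F.Finite) :
    {x : P | wayBelowZ Z F {x}} = {p : P | ∃ a ∈ F, wayBelowZ Z {a} {p}} := by
  ext x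
  constructor
  · intro h
    change wayBelowZ Z F {x} at h
    by_contra hcon
    have hwit : ∀ a : P, ∃ S : Set P, a ∈ F → S ∈ Z.Z P ∧ x ∈ cutOp S ∧ a ∉ dSet S := by
      intro a
      by_cases ha : a ∈ F
      · by_contra! hno
        refine hcon ⟨a, ha, ?_⟩
        rintro S hS ⟨p, hp, _, rfl, hxp⟩
        by_contra hemp
        obtain ⟨s, hs, has⟩ := (hno S).2 hS (fun u hu => hxp.trans (hp hu))
        exact hemp ⟨s, hs, a, rfl, has⟩
      · exact ⟨∅, fun h' => absurd h' ha⟩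
    choose S hS using hwit
    obtain ⟨y, -, hFy, hy⟩ := exists_common_lower hU hR hw hq h S hF
      (fun a ha => ⟨(hS a ha).1, (hS a ha).2.1⟩)
    obtain ⟨a, ha, hay⟩ := hFy.mem_uSet
    obtain ⟨s, hs, hys⟩ := hy a ha
    exact (hS a ha).2.2 ⟨s, hs, hay.trans hys⟩
  · rintro ⟨a, ha, h⟩
    refine wayBelowZ_mono_left ?_ h
    rintro p ⟨_, rfl, hp⟩
    exact ⟨_, ha, hp⟩
end

section
/- Let Z be a subset system and P a weakly meet s_Z-continuous poset. If for all x, y ∈ P with x ≰ y there exist U ∈ σ^Z(P) and a set V open in the lower topology ω(P) such that x ∈ U, y ∈ V and U ∩ V = ∅, then P is weak s_Z-continuous. -/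
/-!
Let `y` be an upper bound of `↟_Z x` and suppose `x ≰ y`. Separation gives `U ∈ σ^Z(P)` containing
`x` and a lower-open neighbourhood of `y` disjoint from `U`; shrinking the latter to a basic open
set `P \ ↑F` yields a finite `F` with `U ⊆ ↑F` and `y ∉ ↑F` (`exists_finite_basic`). It suffices
that some `f ∈ F` satisfies `f ≪_Z x`, since then `f ≤ y`. Otherwise each `f ∈ F` has a witness
`D_f ∈ Z(P)` with `x ∈ D_f^δ` and `f ∉ ↓D_f`. Weak meet continuity lets one descend from `x`
inside `U` into `↓D_f`, for one `f` after another (`exists_mem_below_all`), and this ends at a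
point of `U ∩ ⋂_f ↓D_f`. That point lies above some `f ∈ F`, contradicting `f ∉ ↓D_f`.
-/

open Set

/-- The sets `P \ ↑F` with `F` finite form a basis of the lower topology. -/
theorem exists_finite_basic {P : Type} [PartialOrder P] {V : Set P}
    (hV : (lowerTop P).IsOpen V) {y : P} (hy : y ∈ V) :
    ∃ F : Set P, F.Finite ∧ y ∉ uSet F ∧ (uSet F)ᶜ ⊆ V := by
  change TopologicalSpace.GenerateOpen _ V at hV
  induction hV with
  | basic s hs =>
    obtain ⟨a, rfl⟩ := hs
    refine ⟨{a}, finite_singleton a, ?_, ?_⟩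
    · rintro ⟨b, rfl, hb⟩
      exact hy hb
    · exact fun p hp hap => hp ⟨a, rfl, hap⟩
  | univ => exact ⟨∅, finite_empty, by rintro ⟨b, hb, -⟩; exact hb, subset_univ _⟩
  | inter s t _ _ ihs iht =>
    obtain ⟨F, hF, hyF, hFs⟩ := ihs hy.1
    obtain ⟨G, hG, hyG, hGt⟩ := iht hy.2
    refine ⟨F ∪ G, hF.union hG, ?_, fun p hp => ⟨hFs ?_, hGt ?_⟩⟩
    · rintro ⟨b, hb | hb, hby⟩
      · exact hyF ⟨b, hb, hby⟩
      · exact hyG ⟨b, hb, hby⟩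
    · rintro ⟨b, hb, hbp⟩
      exact hp ⟨b, Or.inl hb, hbp⟩
    · rintro ⟨b, hb, hbp⟩
      exact hp ⟨b, Or.inr hb, hbp⟩
  | sUnion S _ ih =>
    obtain ⟨s, hs, hys⟩ := hy
    obtain ⟨F, hF, hyF, hFs⟩ := ih s hs hys
    exact ⟨F, hF, hyF, hFs.trans (subset_sUnion_of_mem hs)⟩

theorem compl_mem_GammaZ {Z : SubsetSystem} {P : Type} [PartialOrder P] {U : Set P}
    (hU : U ∈ sigmaZ Z P) : Uᶜ ∈ GammaZ Z P := by
  intro S hS hSU p hp hpU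
  obtain ⟨q, hqS, hqU⟩ := hU S hS ⟨p, hp, hpU⟩
  exact hSU hqS hqU

/-- One descent step: `x ∈ cl(↓x ∩ ↓D)`, so the neighbourhood `U` of `x` meets `↓x ∩ ↓D`. -/
theorem exists_mem_below {Z : SubsetSystem} {P : Type} [PartialOrder P] (hw : WMSZ Z P)
    {U : Set P} (hU : U ∈ sigmaZ Z P) {x : P} (hx : x ∈ U) {D : Set P} (hD : D ∈ Z.Z P)
    (hxD : x ∈ cutOp D) : ∃ z ∈ U, z ≤ x ∧ z ∈ dSet D := by
  by_contra! h
  exact hw x D hD hxD Uᶜ ⟨compl_mem_GammaZ hU, fun z hz hzU => h z hzU hz.1 hz.2⟩ hx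

/-- Finitely many descent steps. They can be iterated because each cut `(D f)^δ` is a lower set,
and earlier steps are preserved because each `↓(D f)` is. -/
theorem exists_mem_below_all {Z : SubsetSystem} {P : Type} [PartialOrder P] (hw : WMSZ Z P)
    {U : Set P} (hU : U ∈ sigmaZ Z P) {x : P} (hx : x ∈ U) {F : Set P} (hF : F.Finite)
    (D : P → Set P) (hD : ∀ f ∈ F, D f ∈ Z.Z P) (hxD : ∀ f ∈ F, x ∈ cutOp (D f)) :
    ∃ z ∈ U, z ≤ x ∧ ∀ f ∈ F, z ∈ dSet (D f) := by
  induction F, hF using Set.Finite.induction_on with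
  | empty => exact ⟨x, hx, le_rfl, fun f hf => hf.elim⟩
  | @insert a s _ _ ih =>
    obtain ⟨z, hzU, hzx, hz⟩ := ih (fun f hf => hD f (Or.inr hf)) (fun f hf => hxD f (Or.inr hf))
    obtain ⟨w, hwU, hwz, hwD⟩ := exists_mem_below hw hU hzU (hD a (Or.inl rfl))
      (fun u hu => hzx.trans (hxD a (Or.inl rfl) hu))
    refine ⟨w, hwU, hwz.trans hzx, ?_⟩
    rintro f (rfl | hf)
    · exact hwD
    · obtain ⟨d, hd, hzd⟩ := hz f hf
      exact ⟨d, hd, hwz.trans hzd⟩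

theorem exists_of_not_wayBelowZ {Z : SubsetSystem} {P : Type} [PartialOrder P] {f x : P}
    (h : f ∉ ddArrow Z x) : ∃ D ∈ Z.Z P, x ∈ cutOp D ∧ f ∉ dSet D := by
  by_contra! hc
  refine h fun S hS hne => ?_
  obtain ⟨p, hp, b, rfl, hbp⟩ := hne
  obtain ⟨d, hd, hfd⟩ := hc S hS (fun u hu => hbp.trans (hp hu))
  exact ⟨d, hd, f, rfl, hfd⟩

/-- a weakly meet `s_Z`-continuous poset in which points `x ≰ y` can be
separated by a `σ^Z`-open set and a lower-topology-open set is weak `s_Z`-continuous. -/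
theorem stmt5 (Z : SubsetSystem) (P : Type) [PartialOrder P] (hw : WMSZ Z P)
    (hsep : ∀ x y : P, ¬ x ≤ y → ∃ U ∈ sigmaZ Z P, ∃ V : Set P,
      (lowerTop P).IsOpen V ∧ x ∈ U ∧ y ∈ V ∧ U ∩ V = ∅) :
    WeakSZCont Z P := by
  intro x y hy
  by_contra hxy
  obtain ⟨U, hU, V, hV, hxU, hyV, hUV⟩ := hsep x y hxy
  obtain ⟨F, hF, hyF, hFV⟩ := exists_finite_basic hV hyV
  have hnot : ∀ f, f ∈ F → ∃ D ∈ Z.Z P, x ∈ cutOp D ∧ f ∉ dSet D := fun f hf =>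
    exists_of_not_wayBelowZ fun hfx => hyF ⟨f, hf, hy hfx⟩
  choose! D hD hxD hfD using hnot
  obtain ⟨z, hzU, -, hz⟩ := exists_mem_below_all hw hU hxU hF D hD hxD
  have hzF : z ∈ uSet F := by
    by_contra hzF
    exact (hUV ▸ (⟨hzU, hFV hzF⟩ : z ∈ U ∩ V) : z ∈ (∅ : Set P))
  obtain ⟨f, hf, hfz⟩ := hzF
  obtain ⟨d, hd, hzd⟩ := hz f hf
  exact hfD f hf ⟨d, hd, hfz.trans hzd⟩
end

section
/- Let Z be a subset hereditary subset system. Then every zcpo P has a lower hereditary Z-Scott topology. -/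
/-!
Both inclusions compare the cut of a set `S ⊆ A` taken in `A` with the one taken in `P`. The cut
in `P` of a `Z`-set `S` lies in `A`, as `A` is closed, and is contained in the cut in `A`, which has
fewer upper bounds to respect; so a closed set of `A` is already closed in `P`. Conversely, the
supremum of `S` in `P` lies in the cut of `S`, hence in `A`, so every element of the cut in `A` is
below it, and the two cuts agree; this makes traces of closed sets closed.
-/

open Set

/-- every zcpo has a lower hereditary `Z`-Scott topology. -/
theorem stmt9 (Z : SubsetSystem) (hZ : SubsetHered Z) (P : Type) [PartialOrder P]
    (hP : ∀ D ∈ Z.Z P, ∃ s : P, IsLUB D s) :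
    LowerHered Z P := by
  intro A hA
  ext C
  constructor
  · intro hC
    refine ⟨Subtype.val '' C, ?_, (Set.preimage_image_eq C Subtype.val_injective).symm⟩
    intro S hS hSC x hx
    have hSA : S ⊆ A := hSC.trans (Subtype.coe_image_subset A C)
    have hS' : (Subtype.val : A → P) '' (Subtype.val ⁻¹' S) = S := by
      rw [Subtype.image_preimage_coe, Set.inter_eq_right.mpr hSA]
    -- heredity pulls `S` back to a member of `Z(A)`
    have hmem : (Subtype.val ⁻¹' S : Set A) ∈ Z.Z A :=
      (hZ A P Subtype.val (fun _ _ => Iff.rfl) _).mpr (hS'.symm ▸ hS)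
    have hsub : (Subtype.val ⁻¹' S : Set A) ⊆ C := by
      intro y hy
      obtain ⟨c, hc, hcy⟩ := hSC hy
      exact Subtype.ext hcy ▸ hc
    refine ⟨⟨x, hA S hS hSA hx⟩, hC _ hmem hsub ?_, rfl⟩
    intro u hu
    exact hx fun y hy => hu (show (⟨y, hSA hy⟩ : A) ∈ Subtype.val ⁻¹' S from hy)
  · rintro ⟨B, hB, rfl⟩ S hS hSB x hx
    have hmem : (Subtype.val : A → P) '' S ∈ Z.Z P :=
      Z.image_mem A P Subtype.val (fun _ _ h => h) S hS
    obtain ⟨s, hs⟩ := hP _ hmem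
    -- the supremum lies in the cut of `S`, hence in `A`, so it bounds `S` within `A`
    have hsA : s ∈ A := hA _ hmem (Subtype.coe_image_subset A S) fun u hu => hs.2 hu
    have hxs : (x : P) ≤ s :=
      hx (show (⟨s, hsA⟩ : A) ∈ upperBounds S from fun y hy => hs.1 ⟨y, hy, rfl⟩)
    exact hB _ hmem (Set.image_subset_iff.mpr hSB) fun u hu => hxs.trans (hs.2 hu)
end

section
/- Let Z be a subset system, S and T posets, and let g : S → T and d : T → S be monotone maps forming a Galois connection with d the lower adjoint (d(t) ≤ s iff t ≤ g(s) for all s ∈ S, t ∈ T). Then for every C ∈ Γ^Z(S), the down-closure ↓(g(C)) of the image g(C) belongs to Γ^Z(T). -/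
/-!
Since `C` is a lower set, the adjunction gives `↓g(C) = d⁻¹(C)`. The lower adjoint `d` maps
`Z`-sets to `Z`-sets and satisfies `d(E^δ) ⊆ d(E)^δ`, so preimages under `d` of members of
`Γ^Z(S)` lie in `Γ^Z(T)`.
-/

open Set

/-- for a Galois connection `(g, d)` with `d` the lower adjoint, and
`C ∈ Γ^Z(S)`, the down-closure `↓g(C)` belongs to `Γ^Z(T)`. -/
theorem stmt16 (Z : SubsetSystem) (S T : Type) [PartialOrder S] [PartialOrder T]
    (g : S → T) (d : T → S) (hg : Monotone g) (hd : Monotone d)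
    (gc : ∀ (s : S) (t : T), d t ≤ s ↔ t ≤ g s)
    (C : Set S) (hC : C ∈ GammaZ Z S) :
    dSet (g '' C) ∈ GammaZ Z T := by
  -- Singletons are `Z`-sets and `{x}^δ = ↓x`, so `C` is a lower set.
  have hlow : ∀ x ∈ C, ∀ y, y ≤ x → y ∈ C := fun x hx y hyx =>
    hC {x} (Z.singleton_mem S x) (singleton_subset_iff.2 hx)
      (fun _ hu => hyx.trans (hu rfl))
  intro E hE hEC t ht
  have hsub : d '' E ⊆ C := by
    rintro _ ⟨e, he, rfl⟩
    obtain ⟨_, ⟨c, hc, rfl⟩, hec⟩ := hEC he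
    exact hlow c hc _ ((gc c e).2 hec)
  -- `g` sends upper bounds of `d '' E` to upper bounds of `E`.
  have hcut : d t ∈ cutOp (d '' E) := fun u hu =>
    (gc u t).2 (ht fun e he => (gc u e).1 (hu (mem_image_of_mem d he)))
  exact ⟨g (d t), mem_image_of_mem g (hC _ (Z.image_mem T S d hd E hE) hsub hcut),
    (gc _ _).1 le_rfl⟩
end

section
/- Let Z be a subset system, S and T posets, and let g : S → T and d : T → S be monotone maps forming a Galois connection with d the lower adjoint (d(t) ≤ s iff t ≤ g(s) for all s ∈ S, t ∈ T). Consider: (1) g(A^δ) ⊆ (g(A))^δ for every A ∈ Γ^Z(S); (2) d preserves the relation ≺_Z, i.e., x ≺_Z y in T implies d(x) ≺_Z d(y) in S. Then (1) implies (2); and if T is δ_Z-continuous, then (2) implies (1). -/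
/-!
A lower adjoint `d` satisfies `d (D^δ) ⊆ (d D)^δ`, so preimages under `d` of sets in `Γ^Z(S)` lie in
`Γ^Z(T)` (`preimage_mem_GammaZ`); moreover members of `Γ^Z` are lower sets, since `Z` contains the
singletons.

(1) ⇒ (2): let `x ≺ y`, `A ∈ Γ^Z(S)` and `d y ∈ A^δ`. By (1), `y ≤ g (d y) ∈ (g A)^δ`, and
`g A ⊆ d⁻¹ A` because `d (g a) ≤ a`. So `y ∈ (d⁻¹ A)^δ` with `d⁻¹ A ∈ Γ^Z(T)`, whence `d x ∈ A`.

(2) ⇒ (1): let `s ∈ A^δ`. For `m ≺ g s`, (2) gives `d m ≺ d (g s)`, and `d (g s) ≤ s` lies in `A^δ`,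
so `d m ∈ A` and `m ≤ g (d m) ∈ g A`. Thus every upper bound of `g A` bounds `{m | m ≺ g s}`, and
`δ_Z`-continuity of `T` at `g s` puts `g s` in `(g A)^δ`.
-/

open Set

theorem isLowerSet_of_mem_GammaZ {Z : SubsetSystem} {P : Type} [PartialOrder P] {A : Set P}
    (hA : A ∈ GammaZ Z P) : IsLowerSet A := fun a _ hba ha =>
  hA {a} (Z.singleton_mem P a) (Set.singleton_subset_iff.2 ha)
    fun _ hu => hba.trans (hu (Set.mem_singleton a))

theorem preimage_mem_GammaZ {Z : SubsetSystem} {S T : Type} [PartialOrder S] [PartialOrder T]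
    {g : S → T} {d : T → S} (hgc : GaloisConnection d g) {A : Set S} (hA : A ∈ GammaZ Z S) :
    d ⁻¹' A ∈ GammaZ Z T := fun D hD hDA t ht =>
  hA (d '' D) (Z.image_mem T S d hgc.monotone_l D hD) (Set.image_subset_iff.2 hDA) fun u hu =>
    -- `g u` bounds `D` because `u` bounds `d '' D`
    (hgc t u).2 (ht fun e he => (hgc e u).1 (hu (Set.mem_image_of_mem d he)))

/-- for a Galois connection `(g, d)` with `d` the lower adjoint:
(1) `g(A^δ) ⊆ (g(A))^δ` for all `A ∈ Γ^Z(S)` implies (2) `d` preserves `≺_Z`; and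
if `T` is `δ_Z`-continuous then (2) implies (1). -/
theorem stmt17 (Z : SubsetSystem) (S T : Type) [PartialOrder S] [PartialOrder T]
    (g : S → T) (d : T → S) (hg : Monotone g) (hd : Monotone d)
    (gc : ∀ (s : S) (t : T), d t ≤ s ↔ t ≤ g s) :
    ((∀ A ∈ GammaZ Z S, g '' cutOp A ⊆ cutOp (g '' A)) →
      ∀ x y : T, beneathZ Z x y → beneathZ Z (d x) (d y)) ∧
    (DeltaZCont Z T →
      (∀ x y : T, beneathZ Z x y → beneathZ Z (d x) (d y)) →
      ∀ A ∈ GammaZ Z S, g '' cutOp A ⊆ cutOp (g '' A)) := by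
  have hgc : GaloisConnection d g := fun t s => gc s t
  refine ⟨fun h1 x y hxy A hA hy => ?_, fun hT h2 A hA => ?_⟩
  · refine hxy (d ⁻¹' A) (preimage_mem_GammaZ hgc hA) fun u hu => ?_
    refine (hgc.le_u_l y).trans (h1 A hA (Set.mem_image_of_mem g hy) ?_)
    rintro _ ⟨a, ha, rfl⟩
    exact hu (isLowerSet_of_mem_GammaZ hA (hgc.l_u_le a) ha)
  · rintro _ ⟨s, hs, rfl⟩ u hu
    refine hT (g s) fun m hm => ?_
    have hdm : d m ∈ A := h2 m (g s) hm A hA fun v hv => (hgc.l_u_le s).trans (hs hv)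
    exact (hgc.le_u_l m).trans (hu (Set.mem_image_of_mem g hdm))
end

section
/- Let Z be a subset system and L a zcpo. Then k_Z(L), the set of Z-compact elements of L with the induced order, is a zcpo; moreover, for every D ∈ Z(k_Z(L)), the supremum of D in L is Z-compact and equals the supremum of D in k_Z(L). -/
/-!
Let `s` be the supremum in `L` of a `Z`-set `D` of `Z`-compact elements, and let `A ∈ Γ^Z(L)` with
`s ∈ A^δ`. Every `d ∈ D` lies below `s`, hence in the lower set `A^δ`, hence in `A` by compactness.
So `D ⊆ A`, and since `D` is a `Z`-set of `L` (as a monotone image), `s ∈ D^δ ⊆ A`. Thus `s` is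
`Z`-compact, and a supremum in `L` that belongs to `k_Z(L)` is also the supremum there.
-/

open Set

/-- if `L` is a zcpo then `k_Z(L)` is a zcpo; moreover the supremum in
`L` of any `D ∈ Z(k_Z(L))` is `Z`-compact and is the supremum of `D` in `k_Z(L)`. -/
theorem stmt18 (Z : SubsetSystem) (L : Type) [PartialOrder L]
    (hL : ∀ D ∈ Z.Z L, ∃ s : L, IsLUB D s) :
    (∀ D ∈ Z.Z ↥(kZ Z L), ∃ t : ↥(kZ Z L), IsLUB D t) ∧
    (∀ D ∈ Z.Z ↥(kZ Z L), ∀ s : L, IsLUB (Subtype.val '' D) s →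
      ∃ hs : s ∈ kZ Z L, IsLUB D (⟨s, hs⟩ : ↥(kZ Z L))) := by
  have key : ∀ D ∈ Z.Z ↥(kZ Z L), ∀ s : L, IsLUB (Subtype.val '' D) s →
      ∃ hs : s ∈ kZ Z L, IsLUB D (⟨s, hs⟩ : ↥(kZ Z L)) := by
    intro D hD s hs
    have hk : s ∈ kZ Z L := by
      intro A hA hsA
      refine hA _ (Z.image_mem _ _ Subtype.val (Subtype.mono_coe _) D hD) ?_ (fun u hu => hs.2 hu)
      -- Cuts are lower sets, so every `d ∈ D` lies in the cut of `A` along with `s`;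
      -- compactness of `d` then puts it in `A`.
      rintro _ ⟨d, hd, rfl⟩
      exact d.2 A hA fun u hu => (hs.1 ⟨d, hd, rfl⟩).trans (hsA hu)
    refine ⟨hk, fun d hd => hs.1 ⟨d, hd, rfl⟩, fun t ht => hs.2 ?_⟩
    rintro _ ⟨d, hd, rfl⟩
    exact ht hd
  refine ⟨fun D hD => ?_, key⟩
  obtain ⟨s, hs⟩ := hL _ (Z.image_mem _ _ Subtype.val (Subtype.mono_coe _) D hD)
  obtain ⟨hk, h⟩ := key D hD s hs
  exact ⟨_, h⟩
end
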